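/- Av(Always-k; N, M) ≤ (M/k) · Av(Deterministic; N, M): fix M ≥ 1 and k ≥ 1 with k dividing M, and a configuration c : ℤ×ℤ → ℤ with nonnegative values. If S is a legal stabilising toppling sequence for amount M and threshold 4M from c, and T is a legal stabilising toppling sequence for amount k and threshold 4M from c, then for every vertex v, the occurrence count of v in T is at most (M/k) times the occurrence count of v in S; in particular the length of T is at most (M/k) times the length of S. -/

import Mathlib

/-- Configurations: finitely supported functions on `ℤ × ℤ` with integer values. -/
abbrev Config := (ℤ × ℤ) →₀ ℤ

/-- The four neighbours of a vertex `v = (x, y)` in `ℤ × ℤ`. -/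
def nbrs (v : ℤ × ℤ) : Finset (ℤ × ℤ) :=
  {(v.1 + 1, v.2), (v.1 - 1, v.2), (v.1, v.2 + 1), (v.1, v.2 - 1)}

/-- The amount-`k` toppling at `v`: `c − 4k·𝟙_v + k·Σ_{w∼v} 𝟙_w`. -/
noncomputable def topp (k : ℤ) (v : ℤ × ℤ) (c : Config) : Config :=
  c - Finsupp.single v (4 * k) + ∑ w ∈ nbrs v, Finsupp.single w k


/-- Applying the amount-`k` topplings along a list `S = (v₁, …, vₙ)`:
`Topp_k(vₙ) ∘ ⋯ ∘ Topp_k(v₁)`. -/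
noncomputable def toppList (k : ℤ) (S : List (ℤ × ℤ)) (c : Config) : Config :=
  S.foldl (fun c v => topp k v c) c

/-- `S` is a legal toppling sequence (amount `k`, threshold `T`) from `c`:
each toppled vertex is unstable at the time it topples. -/
def legal (k T : ℤ) : List (ℤ × ℤ) → Config → Prop
  | [], _ => True
  | v :: S, c => T ≤ c v ∧ legal k T S (topp k v c)

/-- `c` is stable for threshold `T`: every vertex has value `< T`. -/
def stable (T : ℤ) (c : Config) : Prop := ∀ v, c v < T

theorem mem_nbrs_comm {v w : ℤ × ℤ} : w ∈ nbrs v ↔ v ∈ nbrs w := by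
  simp only [nbrs, Finset.mem_insert, Finset.mem_singleton, Prod.ext_iff]
  omega

theorem topp_apply (k : ℤ) (v : ℤ × ℤ) (c : Config) (w : ℤ × ℤ) :
    topp k v c w =
      c w - 4 * k * (if v = w then 1 else 0) + k * ∑ x ∈ nbrs w, (if v = x then 1 else 0) := by
  have h : (∑ x ∈ nbrs v, Finsupp.single x k) w = if w ∈ nbrs v then k else 0 := by
    simp [Finsupp.finsetSum_apply, Finsupp.single_apply]
  simp only [topp, Finsupp.add_apply, Finsupp.sub_apply, h, Finsupp.single_apply,
    Finset.sum_ite_eq, mem_nbrs_comm (v := v)]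
  split_ifs <;> ring

theorem toppList_apply (k : ℤ) (S : List (ℤ × ℤ)) (c : Config) (w : ℤ × ℤ) :
    toppList k S c w =
      c w - 4 * k * (S.count w : ℤ) + k * ∑ x ∈ nbrs w, (S.count x : ℤ) := by
  induction S generalizing c with
  | nil => simp [toppList]
  | cons v S ih =>
    have h : toppList k (v :: S) c = toppList k S (topp k v c) := rfl
    simp only [h, ih, topp_apply, List.count_cons, Nat.cast_add, Finset.sum_add_distrib,
      beq_iff_eq, Nat.cast_ite, Nat.cast_one, Nat.cast_zero]
    ring

/-- Least action principle: a legal sequence topples every vertex at most as often as any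
nonnegative toppling function `u`, legal or not, that stabilises the configuration. -/
theorem count_le_of_legal {k t : ℤ} (hk : 0 ≤ k) {L : List (ℤ × ℤ)} {c : Config}
    (hL : legal k t L c) {u : ℤ × ℤ → ℤ} (hu : ∀ v, 0 ≤ u v)
    (hst : ∀ v, c v - 4 * k * u v + k * ∑ x ∈ nbrs v, u x < t) (v : ℤ × ℤ) :
    (L.count v : ℤ) ≤ u v := by
  induction L generalizing c u with
  | nil => simpa using hu v
  | cons a L ih =>
    obtain ⟨ha, hL⟩ := hL
    have hpos : 1 ≤ u a := by
      by_contra! hlt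
      have h0 : u a = 0 := le_antisymm (by omega) (hu a)
      have hsum : 0 ≤ k * ∑ x ∈ nbrs a, u x :=
        mul_nonneg hk (Finset.sum_nonneg fun x _ => hu x)
      have hsta := hst a
      rw [h0] at hsta
      linarith
    have key := ih (u := fun x => u x - if a = x then 1 else 0) hL
      (fun x => by
        by_cases hx : a = x
        · subst hx; simpa using hpos
        · simpa [hx] using hu x)
      (fun x => by
        have hx := hst x
        rw [topp_apply, Finset.sum_sub_distrib]
        linarith)
    simp only [List.count_cons, beq_iff_eq, Nat.cast_add, Nat.cast_ite, Nat.cast_one,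
      Nat.cast_zero]
    linarith

/-- `Av(Always-k; N, M) ≤ (M/k) · Av(Deterministic; N, M)`, locally at each vertex:
if `S` is a legal stabilising sequence for amount `M`, threshold `4M` from a nonnegative
configuration `c`, and `T` is a legal stabilising sequence for amount `k`, threshold `4M`
from `c` (where `k ∣ M`), then each vertex occurs in `T` at most `M/k` times as often as
in `S`; in particular the length of `T` is at most `M/k` times the length of `S`. -/
theorem alwaysk_le_deterministic (M k : ℕ) (hM : 1 ≤ M) (hk : 1 ≤ k) (hdvd : k ∣ M)
    (c : Config) (hc : ∀ v, 0 ≤ c v) (S T : List (ℤ × ℤ))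
    (hS : legal (M : ℤ) (4 * M) S c) (hSstab : stable (4 * M) (toppList (M : ℤ) S c))
    (hT : legal (k : ℤ) (4 * M) T c) (hTstab : stable (4 * M) (toppList (k : ℤ) T c)) :
    (∀ v : ℤ × ℤ, T.count v ≤ (M / k) * S.count v) ∧
      T.length ≤ (M / k) * S.length := by
  have hMk : (k : ℤ) * ((M / k : ℕ) : ℤ) = M := by exact_mod_cast Nat.mul_div_cancel' hdvd
  have hcount : ∀ v, T.count v ≤ (M / k) * S.count v := by
    intro v
    have h := count_le_of_legal (Int.natCast_nonneg k) hT
      (u := fun x => ((M / k : ℕ) : ℤ) * (S.count x : ℤ)) (fun x => by positivity)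
      (fun x => by
        have hx := hSstab x
        rw [toppList_apply, ← hMk] at hx
        rw [← Finset.mul_sum, ← hMk]
        linarith) v
    exact_mod_cast h
  refine ⟨hcount, ?_⟩
  have hle : (T : Multiset (ℤ × ℤ)) ≤ (M / k) • (S : Multiset (ℤ × ℤ)) := by
    rw [Multiset.le_iff_count]
    intro v
    rw [Multiset.count_nsmul, Multiset.coe_count, Multiset.coe_count]
    convert hcount v using 3 <;> exact lawful_beq_subsingleton _ _
  simpa using Multiset.card_le_card hle
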